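/- arXiv:1103.3581 — 2 statements merged into one kernel-verified Lean document; each statement's English description precedes it below -/
import Mathlib

section
/- Let Q be a finite abelian group whose cardinality is a power of 3, and let φ : alternatingGroup (Fin 6) →* MulAut Q be an action of the alternating group on 6 letters on Q. Suppose some element s ∈ alternatingGroup (Fin 6) of order 5 acts fixed point freely: for every x ∈ Q, if φ(s)(x) = x then x = 1. Then Q is elementary abelian (x^3 = 1 for every x ∈ Q), and moreover every φ-invariant subgroup of Q has a φ-invariant direct complement in Q. -/
/-! Write the group additively, as a `ℤ[Alt(6)]`-module `M` on which multiplication by `2` is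
injective. By Sylow's theorem every element of order `5` acts without fixed points, so the sum of
the powers of every such element acts as `0`.

Let `N` be the norm of a Klein four-group `V` with two fixed letters `0` and `1`. A `V`-fixed
vector `x` turns out to be fixed by the whole stabiliser of `0` and `1`, so that it generates a
family of vectors `y p q` indexed by ordered pairs of letters with `y 0 1 = x`. The vanishing sums
over `5`-cycles show that `3 • y = 0` and `y p q = y 0 q - y 0 p`, and hence that
`N (g x) ∈ ℤ x` for all `g`.

Counting in the group ring, `10 • z` is a combination of translates of the vectors `N (g z)`,
for every `z`. Hence `3 • M = 0`. If `U` is an invariant subgroup and `C` is a complement of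
`N U` in the elementary abelian group `M`, then `W = {z | ∀ g, N (g z) ∈ C}` is an invariant
complement of `U`: it meets `U` trivially since `N U ∩ C = 0`, and it contains the `V`-fixed
vectors of `C`, so that `N M ⊆ U + W`. -/

open Finset Equiv

section FixedPointFree

variable {k G M : Type*} [CommRing k] [AddCommGroup M] [Module k M]

lemma sum_range_pow_apply_eq_zero [Monoid G] {ρ : Representation k G M} {s : G} {n : ℕ}
    (hs : s ^ n = 1) (hfix : ∀ x, ρ s x = x → x = 0) (x : M) :
    ∑ i ∈ range n, ρ (s ^ i) x = 0 := by
  refine hfix _ (add_right_cancel (b := x) ?_)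
  calc ρ s (∑ i ∈ range n, ρ (s ^ i) x) + x
      = ∑ i ∈ range n, ρ (s ^ (i + 1)) x + ρ (s ^ 0) x := by
        simp only [map_sum, pow_succ', map_mul, Module.End.mul_apply, pow_zero, map_one,
          Module.End.one_apply]
    _ = ∑ i ∈ range n, ρ (s ^ i) x + x := by
        rw [← sum_range_succ' (fun i => ρ (s ^ i) x), sum_range_succ, hs, map_one,
          Module.End.one_apply]

-- In `End M` the operator `(ρ s - 1) ^ p` is a multiple of `p`, so it kills the `p`-torsion.
lemma isSMulRegular_of_pow_prime_eq_one [Monoid G] {ρ : Representation k G M} {s : G} {p : ℕ}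
    (hp : p.Prime) (hs : s ^ p = 1) (hfix : ∀ x, ρ s x = x → x = 0) : IsSMulRegular M p := by
  obtain ⟨r, hr⟩ := (Commute.one_left (ρ s - 1 : Module.End k M)).exists_add_pow_prime_eq hp
  rw [add_sub_cancel, one_pow, ← map_pow, hs, map_one] at hr
  have hinj : Function.Injective (ρ s - 1 : Module.End k M) :=
    (injective_iff_map_eq_zero _).2 fun x hx => hfix x (sub_eq_zero.1 (by simpa using hx))
  rw [isSMulRegular_iff_right_eq_zero_of_smul]
  intro x hx
  have hpow : ((ρ s - 1 : Module.End k M) ^ p) x = 0 := by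
    have h := LinearMap.congr_fun hr x
    have h0 : ((p : Module.End k M) * 1 * (ρ s - 1) * r) x = 0 := by
      rw [mul_assoc, mul_assoc, Module.End.mul_apply, Module.End.natCast_apply, ← map_nsmul,
        hx, map_zero]
    simpa only [LinearMap.add_apply, h0, add_zero, left_eq_add] using h
  rw [Module.End.pow_apply] at hpow
  exact hinj.iterate p (hpow.trans (Function.iterate_fixed (map_zero _) p).symm)

variable [Group G] [Finite G]

lemma exists_conj_mem_zpowers {p : ℕ} [Fact p.Prime] (hG : ¬ p ^ 2 ∣ Nat.card G) {s r : G}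
    (hs : orderOf s = p) (hr : orderOf r = p) : ∃ g : G, g * s * g⁻¹ ∈ Subgroup.zpowers r := by
  have hfac : (Nat.card G).factorization p = 1 := by
    refine le_antisymm ?_ ((Fact.out : p.Prime).factorization_pos_of_dvd Nat.card_pos.ne'
      (hs ▸ orderOf_dvd_natCard s))
    by_contra! h
    exact hG ((pow_dvd_pow p h).trans (Nat.ordProj_dvd _ _))
  let sylow (t : G) (ht : orderOf t = p) : Sylow p G :=
    Sylow.ofCard (Subgroup.zpowers t) (by rw [Nat.card_zpowers, ht, hfac, pow_one])
  obtain ⟨g, hg⟩ := MulAction.exists_smul_eq G (sylow s hs) (sylow r hr)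
  refine ⟨g, ?_⟩
  change g * s * g⁻¹ ∈ sylow r hr
  rw [← hg]
  exact Set.smul_mem_smul_set (a := MulAut.conj g) (Subgroup.mem_zpowers s)

lemma eq_zero_of_apply_eq_self_of_orderOf {ρ : Representation k G M} {p : ℕ} [Fact p.Prime]
    (hG : ¬ p ^ 2 ∣ Nat.card G) {s r : G} (hs : orderOf s = p) (hr : orderOf r = p)
    (hfix : ∀ x, ρ s x = x → x = 0) (x : M) (hx : ρ r x = x) : x = 0 := by
  obtain ⟨g, hg⟩ := exists_conj_mem_zpowers hG hs hr
  obtain ⟨n, hn : r ^ n = g * s * g⁻¹⟩ := mem_powers_iff_mem_zpowers.2 hg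
  have hrn : ρ (r ^ n) x = x := by
    rw [map_pow, Module.End.pow_apply, Function.iterate_fixed hx]
  have hs' : ρ s (ρ g⁻¹ x) = ρ g⁻¹ x := calc
    ρ s (ρ g⁻¹ x) = ρ g⁻¹ (ρ (g * s * g⁻¹) x) := by simp
    _ = ρ g⁻¹ x := by rw [← hn, hrn]
  simpa using congrArg (ρ g) (hfix _ hs')

end FixedPointFree

section Norm

variable {k G M : Type*} [CommRing k] [AddCommGroup M] [Module k M] [Group G]

/-- The norm of a subgroup `V` of `G` on a representation of `G`, that is, the action of the sum of
the elements of `V` in the group ring. -/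
def subgroupNorm (ρ : Representation k G M) (V : Subgroup G) [Fintype V] : Module.End k M :=
  Representation.norm (MonoidHom.comp ρ V.subtype)

lemma subgroupNorm_apply (ρ : Representation k G M) (V : Subgroup G) [Fintype V] (x : M) :
    subgroupNorm ρ V x = ∑ v : V, ρ v x := by
  simp [subgroupNorm, Representation.norm]

variable {ρ : Representation k G M} {V : Subgroup G} {x : M}

lemma apply_fixed_of_mem_normalizer {t : G} (ht : t ∈ Subgroup.normalizer V)
    (hx : ∀ v ∈ V, ρ v x = x) {v : G} (hv : v ∈ V) : ρ v (ρ t x) = ρ t x := by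
  have h := hx _ ((Subgroup.mem_normalizer_iff''.1 ht v).1 hv)
  simpa using congrArg (ρ t) h

variable [Fintype V]

lemma subgroupNorm_apply_of_fixed (hx : ∀ v ∈ V, ρ v x = x) :
    subgroupNorm ρ V x = Fintype.card V • x := by
  simp [subgroupNorm_apply, hx]

lemma apply_subgroupNorm {v : G} (hv : v ∈ V) (x : M) :
    ρ v (subgroupNorm ρ V x) = subgroupNorm ρ V x :=
  Representation.self_norm_apply (MonoidHom.comp ρ V.subtype) ⟨v, hv⟩ x

lemma subgroupNorm_mul_mul {v w : G} (hv : v ∈ V) (hw : w ∈ V) (hx : ∀ v ∈ V, ρ v x = x)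
    (g : G) : subgroupNorm ρ V (ρ (v * g * w) x) = subgroupNorm ρ V (ρ g x) := by
  simp only [map_mul, Module.End.mul_apply, hx w hw]
  exact Representation.norm_self_apply (MonoidHom.comp ρ V.subtype) ⟨v, hv⟩ _

lemma subgroupNorm_apply_of_mem_normalizer {t : G} (ht : t ∈ Subgroup.normalizer V) (x : M) :
    subgroupNorm ρ V (ρ t x) = ρ t (subgroupNorm ρ V x) := by
  rw [subgroupNorm_apply, subgroupNorm_apply, map_sum]
  simp only [← Module.End.mul_apply, ← map_mul]
  exact Fintype.sum_equiv (V.normalizerMonoidHom ⟨t, ht⟩).toEquiv.symm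
    (fun v : V => ρ (v * t) x) (fun v : V => ρ (t * v) x) fun v => by simp [mul_assoc]

-- The powers of `s` sum to `0`, and `s ^ i` and `s ^ (-i)` lie in the same double coset of `V`.
lemma card_nsmul_add_two_nsmul_subgroupNorm {s v : G} (hs : s ^ 5 = 1)
    (hfix : ∀ x, ρ s x = x → x = 0) (hv : v ∈ V) (hsv : v * s * v⁻¹ = s⁻¹)
    (hx : ∀ v ∈ V, ρ v x = x) :
    Fintype.card V • x + 2 • (subgroupNorm ρ V (ρ s x) + subgroupNorm ρ V (ρ (s ^ 2) x)) = 0 := by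
  have hinv {g : G} (hg : v * g * v⁻¹ = g⁻¹) :
      subgroupNorm ρ V (ρ g⁻¹ x) = subgroupNorm ρ V (ρ g x) := by
    rw [← hg, subgroupNorm_mul_mul hv (inv_mem hv) hx]
  have hinv₁ := hinv hsv
  have hinv₂ := hinv (g := s ^ 2) (by rw [← conj_pow, hsv, inv_pow])
  have h3 : s ^ 3 = (s ^ 2)⁻¹ := eq_inv_of_mul_eq_one_left (by rw [← pow_add, hs])
  have h4 : s ^ 4 = s⁻¹ := eq_inv_of_mul_eq_one_left (by rw [← pow_succ, hs])
  have h := congrArg (subgroupNorm ρ V) (sum_range_pow_apply_eq_zero hs hfix x)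
  simp only [sum_range_succ, range_zero, sum_empty, zero_add, map_add, map_zero, h3, h4, hinv₁,
    hinv₂, pow_zero, pow_one, map_one, Module.End.one_apply, subgroupNorm_apply_of_fixed hx] at h
  rw [← h]
  abel

end Norm

section EquivariantPairing

/-- A function of two points of a `G`-set with values in a representation of `G`, compatible with
the actions. It records the `G`-translates of one vector fixed by the stabiliser of two points; the
value `0` on the diagonal is a convention that allows sums over all points. -/
structure IsEquivariantPairing {k G M α : Type*} [CommRing k] [AddCommGroup M] [Module k M]
    [Group G] [MulAction G α] (ρ : Representation k G M) (y : α → α → M) : Prop where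
  diag (p : α) : y p p = 0
  equivariant (g : G) (p q : α) : ρ g (y p q) = y (g • p) (g • q)

variable {k G M α : Type*} [CommRing k] [AddCommGroup M] [Module k M] [Group G] [MulAction G α]
  {ρ : Representation k G M}

lemma exists_isEquivariantPairing {a b : α} {x : M} (hab : a ≠ b)
    (htrans : ∀ p q : α, p ≠ q → ∃ g : G, g • a = p ∧ g • b = q)
    (hx : ∀ g : G, g • a = a → g • b = b → ρ g x = x) :
    ∃ y : α → α → M, IsEquivariantPairing ρ y ∧ y a b = x := by
  classical
  choose! γ hγa hγb using htrans
  let y (p q : α) : M := if p = q then 0 else ρ (γ p q) x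
  have hy (g : G) : y (g • a) (g • b) = ρ g x := by
    have hne : g • a ≠ g • b := fun h => hab (smul_left_cancel g h)
    have hfix : ρ (g⁻¹ * γ (g • a) (g • b)) x = x := hx _
      (by rw [mul_smul, hγa _ _ hne, inv_smul_smul]) (by rw [mul_smul, hγb _ _ hne, inv_smul_smul])
    rw [map_mul, Module.End.mul_apply, Representation.inv_apply_eq_iff] at hfix
    rw [← hfix]
    exact if_neg hne
  refine ⟨y, ⟨fun p => if_pos rfl, fun g p q => ?_⟩, by simpa using hy 1⟩
  obtain rfl | hpq := eq_or_ne p q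
  · simp [y]
  · have h := hy (g * γ p q)
    rw [mul_smul, mul_smul, hγa p q hpq, hγb p q hpq] at h
    rw [h, map_mul, Module.End.mul_apply]
    simp [y, hpq]

variable {y : α → α → M} (hy : IsEquivariantPairing ρ y)
include hy

lemma IsEquivariantPairing.swap : IsEquivariantPairing ρ (Function.swap y) :=
  ⟨hy.diag, fun g p q => hy.equivariant g q p⟩

lemma IsEquivariantPairing.sum_orbit_eq_zero {s : G} {n : ℕ} [NeZero n] (hs : s ^ n = 1)
    (hfix : ∀ x, ρ s x = x → x = 0) {p q : Fin n → α}
    (hp : ∀ i : Fin n, s ^ i.1 • p 0 = p i) (hq : ∀ i : Fin n, s ^ i.1 • q 0 = q i) :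
    ∑ i, y (p i) (q i) = 0 := by
  have h := sum_range_pow_apply_eq_zero hs hfix (y (p 0) (q 0))
  simpa only [Finset.sum_range, hy.equivariant, hp, hq] using h

end EquivariantPairing

lemma alternatingGroup_exists_smul_eq {α : Type*} [Fintype α] [DecidableEq α] {n : ℕ}
    (hn : n + 2 ≤ Fintype.card α) {u v : Fin n → α} (hu : u.Injective) (hv : v.Injective) :
    ∃ g : alternatingGroup α, ∀ i, g • u i = v i := by
  have hn' : n ≤ Nat.card α - 2 := by rw [Nat.card_eq_fintype_card]; omega
  have := alternatingGroup.isMultiplyPretransitive α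
  have := MulAction.isMultiplyPretransitive_of_le (G := alternatingGroup α) (α := α) hn'
    (Nat.sub_le _ _)
  obtain ⟨g, hg⟩ := MulAction.exists_smul_eq (alternatingGroup α) (⟨u, hu⟩ : Fin n ↪ α) ⟨v, hv⟩
  exact ⟨g, fun i => DFunLike.congr_fun hg i⟩

lemma complementedLattice_addSubgroup {A : Type*} [AddCommGroup A] {p : ℕ} [Fact p.Prime]
    (hA : ∀ x : A, p • x = 0) : ComplementedLattice (AddSubgroup A) :=
  let := AddCommGroup.zmodModule hA
  (AddSubgroup.toZModSubmodule (M := A) p).complementedLattice_iff.2 inferInstance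

namespace AltSix

local notation "A₆" => alternatingGroup (Fin 6)

instance fact_prime_five : Fact (Nat.Prime 5) := ⟨Nat.prime_five⟩

/-- The involution `(2 3)(4 5)`, a generator of `klein`. -/
def doubleSwap : A₆ := ⟨c[2, 3] * c[4, 5], Perm.mem_alternatingGroup.2 (by decide)⟩

/-- The involution `(2 4)(3 5)`, a generator of `klein`. -/
def doubleSwap' : A₆ := ⟨c[2, 4] * c[3, 5], Perm.mem_alternatingGroup.2 (by decide)⟩

/-- The Klein four-group acting regularly on `{2, 3, 4, 5}` and fixing `0` and `1`. Its elements
are listed so that statements about it can be decided. -/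
def klein : Subgroup A₆ where
  carrier := {1, doubleSwap, doubleSwap', doubleSwap * doubleSwap'}
  one_mem' := .inl rfl
  inv_mem' := by rintro _ (rfl | rfl | rfl | rfl) <;> decide +kernel
  mul_mem' := by rintro _ _ (rfl | rfl | rfl | rfl) (rfl | rfl | rfl | rfl) <;> decide +kernel

instance : Fintype klein :=
  Fintype.subtype {1, doubleSwap, doubleSwap', doubleSwap * doubleSwap'} fun _ => by
    simp only [mem_insert, mem_singleton]
    exact Iff.rfl

/-- The cycle `(1 2 3 4 5)`, inverted by `doubleSwap * doubleSwap'`. -/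
def fiveCycle : A₆ := ⟨c[1, 2, 3, 4, 5], Perm.mem_alternatingGroup.2 (by decide)⟩

/-- The cycle `(1 2 3 5 4)`, needed together with `fiveCycle` in the group ring identity
`two_nsmul_conj_klein`. -/
def fiveCycle' : A₆ := ⟨c[1, 2, 3, 5, 4], Perm.mem_alternatingGroup.2 (by decide)⟩

/-- The cycle `(2 3 4)`, which together with `klein` generates the stabiliser of `0` and `1`. -/
def threeCycle : A₆ := ⟨c[2, 3, 4], Perm.mem_alternatingGroup.2 (by decide)⟩

lemma fiveCycle_pow_five : fiveCycle ^ 5 = 1 := by decide +kernel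

lemma fiveCycle'_pow_five : fiveCycle' ^ 5 = 1 := by decide +kernel

lemma orderOf_fiveCycle : orderOf fiveCycle = 5 :=
  orderOf_eq_prime fiveCycle_pow_five (by decide +kernel)

lemma orderOf_fiveCycle' : orderOf fiveCycle' = 5 :=
  orderOf_eq_prime fiveCycle'_pow_five (by decide +kernel)

lemma card_klein : Fintype.card klein = 4 := by decide +kernel

lemma klein_smul_zero (v : klein) : (v : A₆) • (0 : Fin 6) = 0 := by decide +kernel +revert

lemma map_klein_smul {q : Fin 6} (h0 : q ≠ 0) (h1 : q ≠ 1) :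
    (univ : Finset klein).val.map (fun v : klein => (v : A₆) • q) =
      ({0, 1}ᶜ : Finset (Fin 6)).val := by
  decide +kernel +revert

lemma exists_mem_klein_conj_fiveCycle : ∃ v ∈ klein, v * fiveCycle * v⁻¹ = fiveCycle⁻¹ :=
  ⟨doubleSwap * doubleSwap', .inr (.inr (.inr rfl)), by decide +kernel⟩

lemma threeCycle_mem_normalizer_klein : threeCycle ∈ Subgroup.normalizer klein := by
  refine Subgroup.mem_normalizer_fintype fun v hv => ?_
  obtain ⟨w, hw⟩ := (by decide +kernel :
    ∀ v : klein, ∃ w : klein, threeCycle * v * threeCycle⁻¹ = w) ⟨v, hv⟩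
  exact hw ▸ w.2

lemma exists_klein_mul_fiveCycle_sq_mul : ∃ v w : klein,
    v * fiveCycle ^ 2 * w = threeCycle * fiveCycle * threeCycle⁻¹ := by
  decide +kernel

lemma exists_klein_mul_threeCycle_mul_fiveCycle_mul : ∃ v w : klein,
    v * (threeCycle * fiveCycle) * w = threeCycle⁻¹ * fiveCycle * threeCycle := by
  decide +kernel

lemma exists_eq_threeCycle_pow_mul {g : A₆} (h0 : g • (0 : Fin 6) = 0)
    (h1 : g • (1 : Fin 6) = 1) : ∃ i : Fin 3, ∃ v : klein, g = threeCycle ^ i.1 * v := by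
  obtain ⟨i, v, hg⟩ := (by decide +kernel : ∀ g : Perm (Fin 6), g 0 = 0 → g 1 = 1 → g.sign = 1 →
    ∃ i : Fin 3, ∃ v : klein, g = threeCycle ^ i.1 * v) g h0 h1 g.2
  exact ⟨i, v, Subtype.ext hg⟩

-- Multisets stand for elements of the group ring. On the right, every summand but the first lies
-- in the ideal generated by the sums of the powers of `fiveCycle` and of `fiveCycle'`, which acts
-- as `0`.
lemma two_nsmul_conj_klein :
    2 • (univ : Finset (Fin 5 × klein)).val.map
        (fun p => fiveCycle ^ p.1.1 * p.2 * (fiveCycle ^ p.1.1)⁻¹) =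
      10 • {1} +
        (univ : Finset (Fin 5)).val.map (fun i => fiveCycle ^ i.1 * (doubleSwap * doubleSwap')) +
        (univ : Finset (Fin 5 × Fin 5)).val.map (fun p =>
          fiveCycle ^ p.1.1 * (fiveCycle' ^ p.2.1 * doubleSwap') * (fiveCycle ^ p.1.1)⁻¹) := by
  decide +kernel

variable {M : Type*} [AddCommGroup M] {ρ : Representation ℤ A₆ M}

section KleinNorm

variable {x : M} (h5 : ∀ g : A₆, orderOf g = 5 → ∀ x, ρ g x = x → x = 0)
include h5

lemma two_nsmul_sum_subgroupNorm_klein (x : M) :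
    2 • ∑ i : Fin 5, ρ (fiveCycle ^ i.1) (subgroupNorm ρ klein (ρ (fiveCycle ^ i.1)⁻¹ x)) =
      10 • x := by
  have h := congrArg (fun m => (m.map fun g => ρ g x).sum) two_nsmul_conj_klein
  have hc := sum_range_pow_apply_eq_zero fiveCycle_pow_five (h5 _ orderOf_fiveCycle)
  have hd := sum_range_pow_apply_eq_zero fiveCycle'_pow_five (h5 _ orderOf_fiveCycle')
  simp only [Finset.sum_range] at hc hd
  simp only [Multiset.map_nsmul, Multiset.sum_nsmul, Multiset.map_add, Multiset.sum_add,
    Multiset.map_map, Function.comp_def, Multiset.map_singleton, Multiset.sum_singleton, map_one,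
    Module.End.one_apply] at h
  simp only [← Finset.sum_eq_multiset_sum, Fintype.sum_prod_type, map_mul, Module.End.mul_apply,
    hc, hd, ← map_sum, map_zero, sum_const_zero, add_zero, ← subgroupNorm_apply] at h
  exact h

lemma isSMulRegular_five : IsSMulRegular M 5 :=
  isSMulRegular_of_pow_prime_eq_one Nat.prime_five fiveCycle_pow_five (h5 _ orderOf_fiveCycle)

variable (h2 : IsSMulRegular M 2)
include h2

lemma eq_zero_of_forall_subgroupNorm_klein_eq_zero
    (hx : ∀ g, subgroupNorm ρ klein (ρ g x) = 0) : x = 0 := by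
  have h := two_nsmul_sum_subgroupNorm_klein h5 x
  simp only [hx, map_zero, sum_const_zero, smul_zero] at h
  exact ((isSMulRegular_five h5).mul h2).right_eq_zero_of_smul h.symm

lemma subgroupNorm_klein_fiveCycle_add (hx : ∀ v ∈ klein, ρ v x = x) :
    subgroupNorm ρ klein (ρ fiveCycle x) +
      ρ threeCycle (subgroupNorm ρ klein (ρ fiveCycle (ρ threeCycle⁻¹ x))) = -(2 • x) := by
  obtain ⟨v, hv, hcv⟩ := exists_mem_klein_conj_fiveCycle
  have hsum := card_nsmul_add_two_nsmul_subgroupNorm fiveCycle_pow_five (h5 _ orderOf_fiveCycle)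
    hv hcv hx
  obtain ⟨u, w, huw⟩ := exists_klein_mul_fiveCycle_sq_mul
  rw [← subgroupNorm_mul_mul u.2 w.2 hx (fiveCycle ^ 2), huw, card_klein] at hsum
  rw [← subgroupNorm_apply_of_mem_normalizer threeCycle_mem_normalizer_klein]
  simp only [map_mul, Module.End.mul_apply] at hsum
  refine h2 ?_
  linear_combination (norm := module) hsum

lemma subgroupNorm_klein_fiveCycle (hx : ∀ v ∈ klein, ρ v x = x) :
    subgroupNorm ρ klein (ρ fiveCycle x) = -x := by
  have hinv : threeCycle⁻¹ = threeCycle * threeCycle := by decide +kernel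
  have ht (z : M) : ρ threeCycle⁻¹ z = ρ threeCycle (ρ threeCycle z) := by simp [hinv]
  have ht3 (z : M) : ρ threeCycle (ρ threeCycle (ρ threeCycle z)) = z := by
    rw [← ht, Representation.inv_self_apply]
  have ht_mem := threeCycle_mem_normalizer_klein
  -- With `t = threeCycle` and `Gᵢ = tⁱ N (fiveCycle • t⁻ⁱ x)`, these say
  -- `G₀ + G₁ = G₁ + G₂ = G₂ + G₀ = -2x`.
  have h₀₁ := subgroupNorm_klein_fiveCycle_add h5 h2 hx
  have h₁₂ := congrArg (ρ threeCycle) (subgroupNorm_klein_fiveCycle_add h5 h2 fun v hv =>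
    apply_fixed_of_mem_normalizer (inv_mem ht_mem) hx hv)
  have h₂₀ := congrArg (ρ threeCycle⁻¹) (subgroupNorm_klein_fiveCycle_add h5 h2 fun v hv =>
    apply_fixed_of_mem_normalizer ht_mem hx hv)
  simp only [ht, map_add, map_neg, map_nsmul, ht3] at h₀₁ h₁₂ h₂₀
  refine h2 ?_
  linear_combination (norm := module) h₀₁ - h₁₂ + h₂₀

lemma threeCycle_apply (hx : ∀ v ∈ klein, ρ v x = x) : ρ threeCycle x = x := by
  have ht := threeCycle_mem_normalizer_klein
  obtain ⟨u, w, huw⟩ := exists_klein_mul_threeCycle_mul_fiveCycle_mul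
  have hconj := subgroupNorm_mul_mul u.2 w.2 hx (threeCycle * fiveCycle)
  simp only [huw, map_mul, Module.End.mul_apply, subgroupNorm_apply_of_mem_normalizer ht,
    subgroupNorm_apply_of_mem_normalizer (inv_mem ht), subgroupNorm_klein_fiveCycle h5 h2 hx,
    subgroupNorm_klein_fiveCycle h5 h2 fun _ hv => apply_fixed_of_mem_normalizer ht hx hv] at hconj
  simpa using hconj.symm

lemma apply_eq_self_of_smul_eq (hx : ∀ v ∈ klein, ρ v x = x) {g : A₆}
    (h0 : g • (0 : Fin 6) = 0) (h1 : g • (1 : Fin 6) = 1) : ρ g x = x := by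
  obtain ⟨i, v, rfl⟩ := exists_eq_threeCycle_pow_mul h0 h1
  rw [map_mul, Module.End.mul_apply, hx v v.2, map_pow, Module.End.pow_apply,
    Function.iterate_fixed (threeCycle_apply h5 h2 hx)]

lemma exists_isEquivariantPairing_of_fixed (hx : ∀ v ∈ klein, ρ v x = x) :
    ∃ y : Fin 6 → Fin 6 → M, IsEquivariantPairing ρ y ∧ y 0 1 = x := by
  refine exists_isEquivariantPairing zero_ne_one (fun p q hpq => ?_)
    fun g => apply_eq_self_of_smul_eq h5 h2 hx
  obtain ⟨g, hg⟩ := alternatingGroup_exists_smul_eq (u := ![0, 1]) (v := ![p, q]) (by decide)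
    (by decide) (injective_pair_iff_ne.2 hpq)
  exact ⟨g, hg 0, hg 1⟩

end KleinNorm

section Pairing

variable {y : Fin 6 → Fin 6 → M} (hy : IsEquivariantPairing ρ y)
  (h5 : ∀ g : A₆, orderOf g = 5 → ∀ x, ρ g x = x → x = 0)
include hy h5

lemma sum_pairing_right_eq_zero (p : Fin 6) : ∑ q, y p q = 0 := by
  have h0 : ∑ q, y 0 q = 0 := by
    rw [Fin.sum_univ_succ, hy.diag, zero_add]
    exact hy.sum_orbit_eq_zero fiveCycle_pow_five (h5 _ orderOf_fiveCycle) (p := fun _ => 0)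
      (q := Fin.succ) (by decide +kernel) (by decide +kernel)
  obtain ⟨g, hg⟩ := alternatingGroup_exists_smul_eq (u := fun _ : Fin 1 => (0 : Fin 6))
    (v := fun _ => p) (by decide) (Function.injective_of_subsingleton _)
    (Function.injective_of_subsingleton _)
  have h := congrArg (ρ g) h0
  simp only [map_sum, hy.equivariant, hg 0, map_zero] at h
  rwa [Fintype.sum_equiv (MulAction.toPerm g) (fun q => y p (g • q)) (y p) fun _ => rfl] at h

lemma sum_pairing_left_eq_zero (q : Fin 6) : ∑ p, y p q = 0 :=
  sum_pairing_right_eq_zero hy.swap h5 q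

lemma sum_pairing_cycle_eq_zero {u : Fin 5 → Fin 6} (hu : u.Injective) :
    ∑ i, y (u i) (u (i + 1)) = 0 := by
  classical
  let extend : Perm (Fin 5) →* Perm (Fin 6) := Perm.extendDomainHom (Equiv.ofInjective u hu)
  have hextend (π : Perm (Fin 5)) (i : Fin 5) : extend π (u i) = u (π i) :=
    Perm.extendDomain_apply_image π (Equiv.ofInjective u hu) i
  let s : A₆ := ⟨extend (finRotate 5), Perm.mem_alternatingGroup.2
    ((Perm.sign_extendDomain _ _).trans (by decide))⟩
  have hs : orderOf s = 5 := by
    rw [← Subgroup.orderOf_coe]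
    exact (orderOf_injective extend (Perm.extendDomainHom_injective _) _).trans
      (orderOf_eq_prime (by decide) (by decide))
  have hpow (i j : Fin 5) : s ^ i.1 • u j = u (i + j) := calc
    s ^ i.1 • u j = extend (finRotate 5 ^ i.1) (u j) := by rw [map_pow]; rfl
    _ = u (i + j) := by rw [hextend]; congr 1; decide +revert
  exact hy.sum_orbit_eq_zero (hs ▸ pow_orderOf_eq_one s) (h5 s hs) (p := u)
    (q := fun i => u (i + 1)) (fun i => by simp [hpow]) fun i => by simp [hpow]

lemma pairing_add_congr {a b m n : Fin 6} (hinj : (![a, b, m, n]).Injective) :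
    y a m + y m b = y a n + y n b := by
  have h : y 3 4 + y 4 0 = y 3 5 + y 5 0 := by
    have h₄ := sum_pairing_cycle_eq_zero hy h5 (u := ![0, 1, 2, 3, 4]) (by decide)
    have h₅ := sum_pairing_cycle_eq_zero hy h5 (u := ![0, 1, 2, 3, 5]) (by decide)
    simp only [Fin.sum_univ_five, Fin.isValue, Fin.reduceAdd, Matrix.cons_val] at h₄ h₅
    linear_combination (norm := module) h₄ - h₅
  obtain ⟨g, hg⟩ := alternatingGroup_exists_smul_eq (u := ![3, 0, 4, 5]) (by decide) (by decide)
    hinj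
  have ha : g • 3 = a := hg 0
  have hb : g • 0 = b := hg 1
  have hm : g • 4 = m := hg 2
  have hn : g • 5 = n := hg 3
  simpa only [map_add, hy.equivariant, ha, hb, hm, hn] using congrArg (ρ g) h

variable (h2 : IsSMulRegular M 2)
include h2

lemma two_nsmul_pairing_add {a b m : Fin 6} (hinj : (![a, b, m]).Injective) :
    2 • (y a m + y m b) = -y a b := by
  have h : 2 • (y 0 2 + y 2 1) = -y 0 1 := by
    have hcongr {n : Fin 6} (hn : (![0, 1, 2, n]).Injective) := pairing_add_congr hy h5 hn
    have h₃ := hcongr (n := 3) (by decide)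
    have h₄ := hcongr (n := 4) (by decide)
    have h₅ := hcongr (n := 5) (by decide)
    have hright := sum_pairing_right_eq_zero hy h5 0
    have hleft := sum_pairing_left_eq_zero hy h5 1
    simp only [Fin.sum_univ_six, hy.diag] at hright hleft
    refine h2 ?_
    linear_combination (norm := module) hright + hleft + h₃ + h₄ + h₅
  obtain ⟨g, hg⟩ := alternatingGroup_exists_smul_eq (u := ![0, 1, 2]) (by decide) (by decide) hinj
  have ha : g • 0 = a := hg 0
  have hb : g • 1 = b := hg 1
  have hm : g • 2 = m := hg 2
  simpa only [map_add, map_neg, map_nsmul, hy.equivariant, ha, hb, hm] using congrArg (ρ g) h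

lemma four_nsmul_pairing (a b : Fin 6) : 4 • y a b = -y b a := by
  obtain rfl | hab := eq_or_ne a b
  · simp [hy.diag]
  have h : 4 • y 4 0 = -y 0 4 := by
    have hcycle := sum_pairing_cycle_eq_zero hy h5 (u := ![0, 1, 2, 3, 4]) (by decide)
    have hadd {a b m : Fin 6} (hinj : (![a, b, m]).Injective) :=
      two_nsmul_pairing_add hy h5 h2 hinj
    have h₀₂ := hadd (a := 0) (b := 2) (m := 1) (by decide)
    have h₂₄ := hadd (a := 2) (b := 4) (m := 3) (by decide)
    have h₀₄ := hadd (a := 0) (b := 4) (m := 2) (by decide)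
    simp only [Fin.sum_univ_five, Fin.isValue, Fin.reduceAdd, Matrix.cons_val] at hcycle
    linear_combination (norm := module) 4 • hcycle - 2 • h₀₂ - 2 • h₂₄ + h₀₄
  obtain ⟨g, hg⟩ := alternatingGroup_exists_smul_eq (u := ![4, 0]) (by decide) (by decide)
    (injective_pair_iff_ne.2 hab)
  have ha : g • 4 = a := hg 0
  have hb : g • 0 = b := hg 1
  simpa only [map_neg, map_nsmul, hy.equivariant, ha, hb] using congrArg (ρ g) h

lemma three_nsmul_pairing (a b : Fin 6) : 3 • y a b = 0 := by
  refine isSMulRegular_five h5 ?_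
  linear_combination (norm := module)
    4 • four_nsmul_pairing hy h5 h2 a b - four_nsmul_pairing hy h5 h2 b a

lemma pairing_add (a m b : Fin 6) : y a m + y m b = y a b := by
  have hanti (p q : Fin 6) : y p q = -y q p := by
    linear_combination (norm := module)
      four_nsmul_pairing hy h5 h2 p q - three_nsmul_pairing hy h5 h2 p q
  obtain rfl | hab := eq_or_ne a b
  · rw [hy.diag, hanti a m, neg_add_cancel]
  obtain rfl | ham := eq_or_ne a m
  · rw [hy.diag, zero_add]
  obtain rfl | hmb := eq_or_ne m b
  · rw [hy.diag, add_zero]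
  have hinj : (![a, b, m]).Injective := by
    simp [Function.Injective, Fin.forall_fin_succ, hab, ham, hmb, hab.symm, ham.symm, hmb.symm]
  refine h2 ?_
  linear_combination (norm := module)
    two_nsmul_pairing_add hy h5 h2 hinj - three_nsmul_pairing hy h5 h2 a b

omit h2 in
lemma subgroupNorm_klein_pairing_mem_zmultiples (hfix : ∀ v ∈ klein, ρ v (y 0 1) = y 0 1)
    (q : Fin 6) : subgroupNorm ρ klein (y 0 q) ∈ AddSubgroup.zmultiples (y 0 1) := by
  obtain rfl | h0 := eq_or_ne q 0
  · simp [hy.diag]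
  obtain rfl | h1 := eq_or_ne q 1
  · rw [subgroupNorm_apply_of_fixed hfix]
    exact nsmul_mem (AddSubgroup.mem_zmultiples _) _
  have hnorm : subgroupNorm ρ klein (y 0 q) = ∑ p ∈ {0, 1}ᶜ, y 0 p := by
    have h := congrArg (fun m => (m.map (y 0)).sum) (map_klein_smul h0 h1)
    simp only [Multiset.map_map, Function.comp_def, ← Finset.sum_eq_multiset_sum] at h
    simp only [subgroupNorm_apply, hy.equivariant, klein_smul_zero, h]
  have hsum := sum_compl_add_sum {0, 1} (y 0)
  rw [sum_pairing_right_eq_zero hy h5, sum_pair zero_ne_one, hy.diag, zero_add] at hsum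
  rw [hnorm, eq_neg_of_add_eq_zero_left hsum]
  exact neg_mem (AddSubgroup.mem_zmultiples _)

end Pairing

section Complement

variable {x : M} (h5 : ∀ g : A₆, orderOf g = 5 → ∀ x, ρ g x = x → x = 0)
  (h2 : IsSMulRegular M 2)
include h5 h2

lemma subgroupNorm_klein_apply_mem_zmultiples (hx : ∀ v ∈ klein, ρ v x = x) (g : A₆) :
    subgroupNorm ρ klein (ρ g x) ∈ AddSubgroup.zmultiples x := by
  obtain ⟨y, hy, rfl⟩ := exists_isEquivariantPairing_of_fixed h5 h2 hx
  have hnorm := subgroupNorm_klein_pairing_mem_zmultiples hy h5 hx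
  rw [hy.equivariant, eq_sub_of_add_eq' (pairing_add hy h5 h2 0 (g • 0) (g • 1)), map_sub]
  exact sub_mem (hnorm _) (hnorm _)

lemma three_nsmul_eq_zero (z : M) : 3 • z = 0 := by
  refine eq_zero_of_forall_subgroupNorm_klein_eq_zero h5 h2 fun g => ?_
  obtain ⟨y, hy, hz⟩ := exists_isEquivariantPairing_of_fixed h5 h2
    fun v hv => apply_subgroupNorm hv (ρ g z)
  rw [map_nsmul, map_nsmul, ← hz, three_nsmul_pairing hy h5 h2]

lemma eq_top_of_subgroupNorm_klein_mem {S : AddSubgroup M} (hS : ∀ g, ∀ z ∈ S, ρ g z ∈ S)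
    (hnorm : ∀ z, subgroupNorm ρ klein z ∈ S) : S = ⊤ := by
  refine (AddSubgroup.eq_top_iff' S).2 fun z => ?_
  have hz : 2 • ∑ i : Fin 5,
      ρ (fiveCycle ^ i.1) (subgroupNorm ρ klein (ρ (fiveCycle ^ i.1)⁻¹ z)) = z := by
    linear_combination (norm := module)
      two_nsmul_sum_subgroupNorm_klein h5 z + 3 • three_nsmul_eq_zero h5 h2 z
  exact hz ▸ nsmul_mem (sum_mem fun i _ => hS _ _ (hnorm _)) 2

lemma exists_invariant_isCompl (U : AddSubgroup M) (hU : ∀ g, ∀ u ∈ U, ρ g u ∈ U) :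
    ∃ W : AddSubgroup M, (∀ g, ∀ w ∈ W, ρ g w ∈ W) ∧ IsCompl U W := by
  have := complementedLattice_addSubgroup (three_nsmul_eq_zero h5 h2)
  obtain ⟨C, hC⟩ := exists_isCompl (U.map (subgroupNorm ρ klein).toAddMonoidHom)
  let W : AddSubgroup M := ⨅ g, C.comap (subgroupNorm ρ klein ∘ₗ ρ g).toAddMonoidHom
  have hW {z : M} : z ∈ W ↔ ∀ g, subgroupNorm ρ klein (ρ g z) ∈ C := AddSubgroup.mem_iInf
  have hWinv (g : A₆) (w : M) (hw : w ∈ W) : ρ g w ∈ W :=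
    hW.2 fun h => by simpa using hW.1 hw (h * g)
  have hnorm (z : M) : subgroupNorm ρ klein z ∈ U ⊔ W := by
    have hz : subgroupNorm ρ klein z ∈ U.map (subgroupNorm ρ klein).toAddMonoidHom ⊔ C :=
      hC.sup_eq_top ▸ AddSubgroup.mem_top _
    obtain ⟨_, ⟨u, hu, rfl⟩, c, hc, huc⟩ := AddSubgroup.mem_sup.1 hz
    have hcu : c = subgroupNorm ρ klein (z - u) := by
      rw [map_sub]
      exact eq_sub_of_add_eq' huc
    have hcW : c ∈ W := hW.2 fun g => AddSubgroup.zmultiples_le_of_mem hc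
      (subgroupNorm_klein_apply_mem_zmultiples h5 h2 (fun v hv => hcu ▸ apply_subgroupNorm hv _) g)
    have hNu : subgroupNorm ρ klein u ∈ U :=
      (subgroupNorm_apply ρ klein u).symm ▸ sum_mem fun v _ => hU v u hu
    exact huc ▸ AddSubgroup.add_mem_sup hNu hcW
  refine ⟨W, hWinv, AddSubgroup.disjoint_def.2 fun {z} hzU hzW => ?_, codisjoint_iff.2 ?_⟩
  · refine eq_zero_of_forall_subgroupNorm_klein_eq_zero h5 h2 fun g => ?_
    exact AddSubgroup.disjoint_def.1 hC.disjoint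
      (AddSubgroup.mem_map_of_mem _ (hU g z hzU)) (hW.1 hzW g)
  · refine eq_top_of_subgroupNorm_klein_mem h5 h2 (fun g z hz => ?_) hnorm
    obtain ⟨u, hu, w, hw, rfl⟩ := AddSubgroup.mem_sup.1 hz
    rw [map_add]
    exact AddSubgroup.add_mem_sup (hU g u hu) (hWinv g w hw)

end Complement

end AltSix

theorem alt6_on_abelian_three_group_general
    (Q : Type*) [CommGroup Q] (hQ : ∀ x : Q, x ^ 2 = 1 → x = 1)
    (φ : alternatingGroup (Fin 6) →* MulAut Q)
    (s : alternatingGroup (Fin 6)) (hs : orderOf s = 5)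
    (hfpf : ∀ x : Q, φ s x = x → x = 1) :
    (∀ x : Q, x ^ 3 = 1) ∧
      ∀ U : Subgroup Q, (∀ g : alternatingGroup (Fin 6), ∀ u ∈ U, φ g u ∈ U) →
        ∃ W : Subgroup Q, (∀ g : alternatingGroup (Fin 6), ∀ w ∈ W, φ g w ∈ W) ∧
          U ⊓ W = ⊥ ∧ U ⊔ W = ⊤ := by
  let := MulDistribMulAction.compHom Q φ
  let ρ := Representation.ofMulDistribMulAction (alternatingGroup (Fin 6)) Q
  have h2 : IsSMulRegular (Additive Q) 2 := isSMulRegular_iff_right_eq_zero_of_smul.2 hQ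
  have hcard : ¬ 5 ^ 2 ∣ Nat.card (alternatingGroup (Fin 6)) := by
    rw [nat_card_alternatingGroup, Nat.card_fin]
    decide
  have h5 (g) (hg : orderOf g = 5) : ∀ x, ρ g x = x → x = 0 :=
    eq_zero_of_apply_eq_self_of_orderOf hcard hs hg hfpf
  refine ⟨AltSix.three_nsmul_eq_zero h5 h2, fun U hU => ?_⟩
  obtain ⟨W, hW, hUW⟩ := AltSix.exists_invariant_isCompl h5 h2 U.toAddSubgroup hU
  have hcompl : IsCompl U W.toSubgroup' := Subgroup.toAddSubgroup.isCompl_iff.2 hUW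
  exact ⟨W.toSubgroup', hW, hcompl.inf_eq_bot, hcompl.sup_eq_top⟩

/-- Lemma 4.7 (Astill–Parker–Waldecker): if `Alt(6)` acts on a finite abelian `3`-group
`Q` with some element of order `5` acting fixed point freely, then `Q` is elementary
abelian, and every invariant subgroup of `Q` has an invariant direct complement. -/
theorem alt6_on_abelian_three_group
    (Q : Type*) [CommGroup Q] [Finite Q]
    (hQcard : ∃ k : ℕ, Nat.card Q = 3 ^ k)
    (φ : alternatingGroup (Fin 6) →* MulAut Q)
    (s : alternatingGroup (Fin 6)) (hs : orderOf s = 5)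
    (hfpf : ∀ x : Q, φ s x = x → x = 1) :
    (∀ x : Q, x ^ 3 = 1) ∧
      ∀ U : Subgroup Q, (∀ g : alternatingGroup (Fin 6), ∀ u ∈ U, φ g u ∈ U) →
        ∃ W : Subgroup Q, (∀ g : alternatingGroup (Fin 6), ∀ w ∈ W, φ g w ∈ W) ∧
          U ⊓ W = ⊥ ∧ U ⊔ W = ⊤ := by
  obtain ⟨k, hk⟩ := hQcard
  have hcop : (Nat.card Q).Coprime 2 := hk ▸ Nat.Coprime.pow_left k (by decide)
  exact alt6_on_abelian_three_group_general Q
    (fun x hx => (powCoprime hcop).injective (by simpa using hx)) φ s hs hfpf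
end

section
/- There exists a finite-dimensional vector space W over ZMod 3 with a ZMod 3-linear action of Y = alternatingGroup (Fin 5), together with a Y-invariant subspace U of W, such that: U is Y-equivariantly isomorphic to the deleted permutation module V over ZMod 3; the quotient W ⧸ U is one-dimensional with trivial Y-action; and U has no Y-invariant direct complement in W. In other words, over ZMod 3 there is a non-split extension of the trivial one-dimensional Alt(5)-module by V, so Ext¹_{Alt(5)}(triv, V) ≠ 0. -/
/-- The deleted permutation module: functions `Fin 5 → ZMod r` summing to zero. -/
def V (r : ℕ) : Submodule (ZMod r) (Fin 5 → ZMod r) where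
  carrier := {f | ∑ i, f i = 0}
  add_mem' := by
    intro a b ha hb
    simp only [Set.mem_setOf_eq, Pi.add_apply, Finset.sum_add_distrib] at *
    rw [ha, hb, add_zero]
  zero_mem' := by simp
  smul_mem' := by
    intro c f hf
    simp only [Set.mem_setOf_eq, Pi.smul_apply, smul_eq_mul, ← Finset.mul_sum] at *
    rw [hf, mul_zero]

/-- The permutation action of `Equiv.Perm (Fin 5)` on `V r`, given by `σ • f = f ∘ σ⁻¹`. -/
def rho (r : ℕ) : Representation (ZMod r) (Equiv.Perm (Fin 5)) (V r) where
  toFun σ :=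
    { toFun := fun f => ⟨fun i => (f : Fin 5 → ZMod r) (σ⁻¹ i),
        (Equiv.sum_comp σ⁻¹ (f : Fin 5 → ZMod r)).trans f.2⟩
      map_add' := fun _ _ => rfl
      map_smul' := fun _ _ => rfl }
  map_one' := rfl
  map_mul' := fun _ _ => rfl

/-!
The point stabilizers of `Alt(5)` are copies of `Alt(4)`, and each maps onto the cyclic group of
order three by its action on the three perfect matchings of the remaining four points. By Shapiro's
lemma this homomorphism `Alt(4) → ZMod 3` comes from a class in the first cohomology of the
permutation module `Fin 5 → ZMod 3`. Concretely, label the three matchings of each complement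
`{i}ᶜ` by `ZMod 3`; a permutation `σ` then changes labels at `i` by an affine map of slope `sign σ`,
and for even `σ` its translation parts form a cocycle. Its values lie in `V 3`: the sum of the
translation parts vanishes for transpositions, hence for all permutations.
A coboundary vanishes at the fixed points of `σ`, whereas a three-cycle fixing `i` permutes the
matchings of `{i}ᶜ` cyclically, so the cocycle is not a coboundary and its extension does not split.
-/

section CocycleExtension

open groupCohomology

universe u

variable {k G A : Type u} [CommRing k] [Group G] [AddCommGroup A] [Module k A]
  {ρ : Representation k G A}

/-- The extension of the trivial representation `k` by `ρ` attached to a 1-cocycle `f`: the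
vector `(0, 1)` is sent by `g` to `(f g, 1)`. -/
def cocycleExtension (f : cocycles₁ (Rep.of ρ)) : Representation k G (A × k) where
  toFun g := ((ρ g).coprod (LinearMap.toSpanSingleton k A (f g))).prod (LinearMap.snd k A k)
  map_one' := by
    ext x <;> simp
  map_mul' g h := by
    have map_mul : f (g * h) = ρ g (f h) + f g := (mem_cocycles₁_iff f.1).1 f.2 g h
    ext x <;> simp [map_mul]

theorem cocycleExtension_apply (f : cocycles₁ (Rep.of ρ)) (g : G) (x : A × k) :
    cocycleExtension f g x = (ρ g x.1 + x.2 • f g, x.2) :=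
  rfl

theorem cocycleExtension_inl (f : cocycles₁ (Rep.of ρ)) (g : G) (a : A) :
    cocycleExtension f g (LinearMap.inl k A k a) = LinearMap.inl k A k (ρ g a) := by
  simp [cocycleExtension_apply]

theorem cocycleExtension_sub_mem_range_inl (f : cocycles₁ (Rep.of ρ)) (g : G) (x : A × k) :
    cocycleExtension f g x - x ∈ LinearMap.range (LinearMap.inl k A k) := by
  simp [LinearMap.range_inl, cocycleExtension_apply]

theorem mem_coboundaries₁_of_isCompl_range_inl (f : cocycles₁ (Rep.of ρ)) {U : Submodule k (A × k)}
    (hU : ∀ g, ∀ x ∈ U, cocycleExtension f g x ∈ U)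
    (hcompl : IsCompl (LinearMap.range (LinearMap.inl k A k)) U) :
    f.1 ∈ coboundaries₁ (Rep.of ρ) := by
  obtain ⟨_, ⟨a, rfl⟩, u, hu, hau⟩ :=
    Submodule.mem_sup.1 (hcompl.sup_eq_top ▸ Submodule.mem_top : ((0, 1) : A × k) ∈ _ ⊔ U)
  have u_eq : u = (-a, 1) := by
    rw [eq_sub_of_add_eq' hau]
    simp
  have u_fixed (g : G) : cocycleExtension f g u = u :=
    sub_eq_zero.1 <| Submodule.disjoint_def.1 hcompl.disjoint _
      (cocycleExtension_sub_mem_range_inl f g u) (U.sub_mem (hU g u hu) hu)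
  refine ⟨a, funext fun g => ?_⟩
  have fst_fixed : -ρ g a + f g = -a := by
    simpa only [u_eq, cocycleExtension_apply, map_neg, one_smul] using
      congrArg Prod.fst (u_fixed g)
  change ρ g a - a = f g
  rw [sub_eq_add_neg, ← fst_fixed, add_neg_cancel_left]

theorem finrank_prod_quotient_range_inl (k A : Type*) [Ring k] [StrongRankCondition k]
    [AddCommGroup A] [Module k A] :
    Module.finrank k ((A × k) ⧸ LinearMap.range (LinearMap.inl k A k)) = 1 := by
  rw [LinearMap.range_inl,
    ((LinearMap.snd k A k).quotKerEquivOfSurjective LinearMap.snd_surjective).finrank_eq,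
    Module.finrank_self]

end CocycleExtension

section MatchingLabel

open Equiv Equiv.Perm

/-- The label of the perfect matching of `{i}ᶜ` that contains the pair `{j, k}`, for distinct
`i, j, k`. It is the quadratic character of the field with five elements at `j + k - 2 * i`: the two
pairs of a matching have opposite values of `j + k - 2 * i`, and `-1` is a square modulo `5`. -/
def matchingLabel (i j k : Fin 5) : ZMod 3 :=
  ![0, 1, -1, -1, 1] (j + k - 2 * i)

/-- The translation part of the affine map by which `σ` changes the labels of the matchings of
`{i}ᶜ`. It is the value at `0`, the label of the matching of `{i}ᶜ` that contains
`{i + 1, i - 1}`. -/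
def labelShift (σ : Perm (Fin 5)) (i : Fin 5) : ZMod 3 :=
  matchingLabel (σ i) (σ (i + 1)) (σ (i - 1))

theorem matchingLabel_swap : ∀ a b : Fin 5, a ≠ b → ∀ i j k : Fin 5, i ≠ j → i ≠ k → j ≠ k →
    matchingLabel (swap a b i) (swap a b j) (swap a b k) =
      -matchingLabel i j k + labelShift (swap a b) i := by
  decide +kernel

theorem sum_labelShift_swap : ∀ a b : Fin 5, a ≠ b → ∑ i, labelShift (swap a b) i = 0 := by
  decide +kernel

theorem labelShift_one : ∀ i : Fin 5, labelShift 1 i = 0 := by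
  decide

theorem ne_succ_pred : ∀ i : Fin 5, i ≠ i + 1 ∧ i ≠ i - 1 ∧ i + 1 ≠ i - 1 := by
  decide

theorem matchingLabel_perm (σ : Perm (Fin 5)) {i j k : Fin 5}
    (hij : i ≠ j) (hik : i ≠ k) (hjk : j ≠ k) :
    matchingLabel (σ i) (σ j) (σ k) = (sign σ : ℤ) * matchingLabel i j k + labelShift σ i := by
  induction σ using swap_induction_on generalizing i j k with
  | one => simp [labelShift_one]
  | swap_mul τ a b hab ih =>
    have swap_label {i j k : Fin 5} (hij : i ≠ j) (hik : i ≠ k) (hjk : j ≠ k) :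
        matchingLabel ((swap a b * τ) i) ((swap a b * τ) j) ((swap a b * τ) k) =
          -matchingLabel (τ i) (τ j) (τ k) + labelShift (swap a b) (τ i) :=
      matchingLabel_swap a b hab _ _ _ (τ.injective.ne hij) (τ.injective.ne hik)
        (τ.injective.ne hjk)
    have shift_mul : labelShift (swap a b * τ) i = -labelShift τ i + labelShift (swap a b) (τ i) :=
      have ⟨h₁, h₂, h₃⟩ := ne_succ_pred i
      swap_label h₁ h₂ h₃
    rw [swap_label hij hik hjk, ih hij hik hjk, shift_mul, Perm.sign_mul, sign_swap hab]
    push_cast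
    ring

theorem labelShift_mul (σ τ : Perm (Fin 5)) (i : Fin 5) :
    labelShift (σ * τ) i = (sign σ : ℤ) * labelShift τ i + labelShift σ (τ i) :=
  have ⟨h₁, h₂, h₃⟩ := ne_succ_pred i
  matchingLabel_perm σ (τ.injective.ne h₁) (τ.injective.ne h₂) (τ.injective.ne h₃)

theorem sum_labelShift (σ : Perm (Fin 5)) : ∑ i, labelShift σ i = 0 := by
  induction σ using swap_induction_on with
  | one => simp only [labelShift_one, Finset.sum_const_zero]
  | swap_mul τ a b hab ih =>
    simp only [labelShift_mul, Finset.sum_add_distrib, ← Finset.mul_sum]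
    rw [ih, Equiv.sum_comp τ (labelShift (swap a b)), sum_labelShift_swap a b hab, mul_zero,
      add_zero]

end MatchingLabel

section MatchingCocycle

open Equiv Equiv.Perm groupCohomology

theorem rho_apply_of_fixed {r : ℕ} {σ : Perm (Fin 5)} {i : Fin 5} (hi : σ i = i) (v : V r) :
    (rho r σ v : Fin 5 → ZMod r) i = (v : Fin 5 → ZMod r) i :=
  congrArg (v : Fin 5 → ZMod r) (inv_eq_iff_eq.2 hi.symm)

/-- The translation parts of `σ` as a vector of `V 3`, indexed by the target `σ i` of the matchings
of `{i}ᶜ`. -/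
def labelTranslation (σ : Perm (Fin 5)) : V 3 :=
  rho 3 σ ⟨labelShift σ, sum_labelShift σ⟩

theorem labelTranslation_apply_of_fixed {σ : Perm (Fin 5)} {i : Fin 5} (hi : σ i = i) :
    (labelTranslation σ : Fin 5 → ZMod 3) i = labelShift σ i :=
  rho_apply_of_fixed hi _

theorem labelTranslation_mul (σ τ : Perm (Fin 5)) :
    labelTranslation (σ * τ) =
      ((sign σ : ℤ) : ZMod 3) • rho 3 σ (labelTranslation τ) + labelTranslation σ := by
  ext i
  change labelShift (σ * τ) ((σ * τ)⁻¹ i) =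
    (sign σ : ℤ) * labelShift τ (τ⁻¹ (σ⁻¹ i)) + labelShift σ (σ⁻¹ i)
  simp [labelShift_mul]

/-- The deleted permutation module as a representation of the alternating group. -/
abbrev altRho (r : ℕ) : Representation (ZMod r) (alternatingGroup (Fin 5)) (V r) :=
  (rho r).comp (alternatingGroup (Fin 5)).subtype

/-- The cocycle of translation parts of even permutations, whose class corresponds under Shapiro's
lemma to the homomorphism `Alt(4) → ZMod 3`. -/
def matchingCocycle : cocycles₁ (Rep.of (altRho 3)) :=
  ⟨fun σ => labelTranslation σ, (mem_cocycles₁_iff _).2 fun σ τ => by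
    have sign_eq : sign (σ : Perm (Fin 5)) = 1 := mem_alternatingGroup.1 σ.2
    simpa [sign_eq] using labelTranslation_mul σ τ⟩

theorem apply_eq_zero_of_mem_coboundaries₁ {r : ℕ} {f : alternatingGroup (Fin 5) → V r}
    (hf : f ∈ coboundaries₁ (Rep.of (altRho r))) {σ : alternatingGroup (Fin 5)} {i : Fin 5}
    (hi : (σ : Perm (Fin 5)) i = i) : (f σ : Fin 5 → ZMod r) i = 0 := by
  obtain ⟨v, rfl⟩ := hf
  exact sub_eq_zero.2 (rho_apply_of_fixed hi v)

theorem matchingCocycle_notMem_coboundaries₁ :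
    matchingCocycle.1 ∉ coboundaries₁ (Rep.of (altRho 3)) := fun h => by
  let c : alternatingGroup (Fin 5) := ⟨swap 2 3 * swap 3 4, mem_alternatingGroup.2 (by decide)⟩
  have c_fixes_zero : (c : Perm (Fin 5)) 0 = 0 := by decide
  have shift_eq_zero : labelShift c 0 = 0 :=
    (labelTranslation_apply_of_fixed c_fixes_zero).symm.trans
      (apply_eq_zero_of_mem_coboundaries₁ h c_fixes_zero)
  exact absurd shift_eq_zero (by decide)

end MatchingCocycle

/-- Over `ZMod 3` there is a non-split extension of the trivial one-dimensional
`Alt(5)`-module by the deleted permutation module `V`: there is a finite-dimensional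
`ZMod 3`-vector space `W` with an `Alt(5)`-action, and an invariant subspace `U`
equivariantly isomorphic to `V`, such that `W ⧸ U` is one-dimensional with trivial
action, and `U` has no invariant direct complement in `W`.
Hence `Ext¹_{Alt(5)}(triv, V) ≠ 0` over `ZMod 3`. -/
theorem exists_nonsplit_extension_of_trivial_by_V_mod_three :
    ∃ (W : Type) (_ : AddCommGroup W) (_ : Module (ZMod 3) W) (_ : Module.Finite (ZMod 3) W)
      (ρ : Representation (ZMod 3) (alternatingGroup (Fin 5)) W)
      (U : Submodule (ZMod 3) W),
      (∀ σ : alternatingGroup (Fin 5), ∀ x ∈ U, ρ σ x ∈ U) ∧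
      (∃ e : U ≃ₗ[ZMod 3] V 3,
        ∀ σ : alternatingGroup (Fin 5), ∀ x y : U, (x : W) = ρ σ y →
          e x = rho 3 (σ : Equiv.Perm (Fin 5)) (e y)) ∧
      Module.finrank (ZMod 3) (W ⧸ U) = 1 ∧
      (∀ σ : alternatingGroup (Fin 5), ∀ x : W, ρ σ x - x ∈ U) ∧
      ¬ ∃ U' : Submodule (ZMod 3) W,
          (∀ σ : alternatingGroup (Fin 5), ∀ x ∈ U', ρ σ x ∈ U') ∧ IsCompl U U' := by
  let inl := LinearMap.inl (ZMod 3) (V 3) (ZMod 3)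
  let e : V 3 ≃ₗ[ZMod 3] LinearMap.range inl := LinearEquiv.ofInjective inl LinearMap.inl_injective
  refine ⟨V 3 × ZMod 3, inferInstance, inferInstance, inferInstance,
    cocycleExtension matchingCocycle, LinearMap.range inl, ?_, ⟨e.symm, ?_⟩,
    finrank_prod_quotient_range_inl (ZMod 3) (V 3),
    cocycleExtension_sub_mem_range_inl matchingCocycle, ?_⟩
  · rintro σ _ ⟨v, rfl⟩
    exact ⟨_, (cocycleExtension_inl matchingCocycle σ v).symm⟩
  · intro σ x y hxy
    obtain ⟨v, rfl⟩ := e.surjective y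
    rw [e.symm_apply_apply, e.symm_apply_eq]
    exact Subtype.ext (hxy.trans (cocycleExtension_inl matchingCocycle σ v))
  · rintro ⟨U', hU', hcompl⟩
    exact matchingCocycle_notMem_coboundaries₁
      (mem_coboundaries₁_of_isCompl_range_inl matchingCocycle hU' hcompl)
end
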